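/- arXiv:2404.06768 — 5 statements merged into one kernel-verified Lean document; each statement's English description precedes it below -/
import Mathlib

section
/- Let n = 2t be an even integer with n ≥ 6, let s be an integer with 2 ≤ s ≤ 3^t − 1 (i.e. s ∉ {1, 3^t, 3^t + 1}), and let W_1, …, W_s be pairwise disjoint t-dimensional F_3-linear subspaces of F_3^n, with f the associated characteristic function. Then for all pairwise distinct w_1, w_2, w_3 ∈ F_3^n with w_1 + w_2 + w_3 = 0, one has Re(f̂(w_1)) + Re(f̂(w_2)) + Re(f̂(w_3)) ≠ 3^n. -/
open Matrix Finset

/-!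
Let `G` be the ambient group. Since the sets `Wₖ ∖ 0` are disjoint,
`ζ ^ f = 1 + (ζ - 1) ∑ₖ 𝟙_{Wₖ ∖ 0}`. A character sums over a subgroup to the order of the
subgroup or to `0`, so at `w ≠ 0` the Walsh transform is `(ζ - 1) (M - s)` with `M ≥ 0` real, and
its real part is at most `(1 - Re ζ) s`. At `w = 0` the real part is
`|G| - (1 - Re ζ) ∑ₖ (|Wₖ| - 1)`, where the loss outweighs two such gains. Three gains at nonzero
points stay below `|G|` because the sets `Wₖ ∖ 0` are disjoint and avoid `0`.
-/

open scoped ComplexOrder Function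

lemma re_lt_one_of_norm_le_one {z : ℂ} (hz : ‖z‖ ≤ 1) (hz1 : z ≠ 1) : z.re < 1 := by
  refine (z.re_le_norm.trans hz).lt_of_ne fun hre => hz1 ?_
  have hnorm : ‖z‖ = 1 := hz.antisymm (hre ▸ z.re_le_norm)
  have hnonneg : 0 ≤ z := Complex.re_eq_norm.1 (hre.trans hnorm.symm)
  exact Complex.ext hre (Complex.nonneg_iff.1 hnonneg).2.symm

lemma sum_indicator_eq_sum_coe {α M : Type*} [Fintype α] [AddCommMonoid M] (s : Set α)
    [Fintype s] (g : α → M) : ∑ x, s.indicator g x = ∑ x : s, g x := by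
  classical
  simp only [Set.indicator_apply, ← Finset.sum_filter]
  exact Finset.sum_subtype _ (by simp) g

section PartialSpread

variable {G ι : Type*} [AddCommGroup G] {H : ι → AddSubgroup G} {z : ℂ}

/-- The union of the sets `H k ∖ {0}`: the support of the characteristic function of the family
`H`. -/
def puncturedUnion (H : ι → AddSubgroup G) : Set G := ⋃ k, (H k : Set G) \ {0}

lemma zero_notMem_puncturedUnion : (0 : G) ∉ puncturedUnion H := by
  simp [puncturedUnion]

lemma mem_puncturedUnion {x : G} : x ∈ puncturedUnion H ↔ x ≠ 0 ∧ ∃ k, x ∈ H k := by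
  simp [puncturedUnion, and_comm]

lemma pairwise_disjoint_punctured (hH : Pairwise (Disjoint on H)) :
    Pairwise (Disjoint on fun k => (H k : Set G) \ {0}) := fun _ _ hij =>
  Set.disjoint_left.2 fun _ hi hj => hi.2 (AddSubgroup.disjoint_def.1 (hH hij) hi.1 hj.1)

variable [Fintype ι]

lemma mulIndicator_puncturedUnion (hH : Pairwise (Disjoint on H)) (x : G) :
    (puncturedUnion H).mulIndicator (fun _ => z) x =
      1 + (z - 1) * ∑ k, ((H k : Set G) \ {0}).indicator 1 x := by
  have hsum : ∑ k, ((H k : Set G) \ {0}).indicator (1 : G → ℂ) x =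
      (puncturedUnion H).indicator 1 x := by
    rw [← Finset.indicator_biUnion_apply _ _ ((pairwise_disjoint_punctured hH).set_pairwise _)]
    simp [puncturedUnion]
  rw [hsum]
  by_cases hx : x ∈ puncturedUnion H <;> simp [hx]

lemma mul_card_le_sum_card_sub_one {m : ℝ} (hcard : ∀ k, m + 1 ≤ Nat.card (H k)) :
    m * Fintype.card ι ≤ ∑ k, ((Nat.card (H k) : ℝ) - 1) := by
  simpa [mul_comm] using
    Finset.sum_le_sum fun k (_ : k ∈ univ) => le_sub_iff_add_le.2 (hcard k)

variable [Fintype G]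

lemma sum_indicator_punctured (K : AddSubgroup G) (ψ : AddChar G ℂ) :
    ∑ x, ((K : Set G) \ {0}).indicator ψ x = ∑ x, (K : Set G).indicator ψ x - 1 := by
  classical
  rw [Set.indicator_sdiff (Set.singleton_subset_iff.2 K.zero_mem)]
  simp [Finset.sum_sub_distrib, Set.indicator_apply]

lemma neg_one_le_sum_indicator_punctured (K : AddSubgroup G) (ψ : AddChar G ℂ) :
    -1 ≤ ∑ x, ((K : Set G) \ {0}).indicator ψ x := by
  classical
  have hsum : ∑ x : (K : Set G), ψ x = ∑ x : K, ψ.compAddMonoidHom K.subtype x := rfl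
  rw [sum_indicator_punctured, sum_indicator_eq_sum_coe, hsum, AddChar.sum_eq_ite]
  split_ifs <;> simp

lemma sum_indicator_punctured_zero (K : AddSubgroup G) :
    ∑ x, ((K : Set G) \ {0}).indicator (0 : AddChar G ℂ) x = Nat.card K - 1 := by
  classical
  rw [sum_indicator_punctured, sum_indicator_eq_sum_coe]
  simp [Nat.card_eq_fintype_card]

/-- The Fourier coefficient at `ψ` of the function equal to `z` on `puncturedUnion H` and to `1`
elsewhere. For a root of unity `z = ζ` this function is `ζ ^ f`, with `f` the characteristic
function of the family, and `ψ` stands for `x ↦ ζ ^ (-w·x)`. -/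
noncomputable def spreadCoeff (H : ι → AddSubgroup G) (z : ℂ) (ψ : AddChar G ℂ) : ℂ :=
  ∑ x, (puncturedUnion H).mulIndicator (fun _ => z) x * ψ x

lemma spreadCoeff_eq (hH : Pairwise (Disjoint on H)) (ψ : AddChar G ℂ) :
    spreadCoeff H z ψ =
      ∑ x, ψ x + (z - 1) * ∑ k, ∑ x, ((H k : Set G) \ {0}).indicator ψ x := by
  rw [Finset.sum_comm, Finset.mul_sum, ← Finset.sum_add_distrib]
  refine Finset.sum_congr rfl fun x _ => ?_
  rw [mulIndicator_puncturedUnion hH, add_mul, one_mul, mul_assoc, Finset.sum_mul]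
  simp [← Set.indicator_mul_left]

lemma re_spreadCoeff_le (hH : Pairwise (Disjoint on H)) (hz : z.re ≤ 1)
    {ψ : AddChar G ℂ} (hψ : ψ ≠ 0) :
    (spreadCoeff H z ψ).re ≤ (1 - z.re) * Fintype.card ι := by
  set S : ℂ := ∑ k, ∑ x, ((H k : Set G) \ {0}).indicator ψ x with hS
  have hle : -(Fintype.card ι : ℂ) ≤ S := by
    simpa using Finset.sum_le_sum fun k (_ : k ∈ univ) =>
      neg_one_le_sum_indicator_punctured (H k) ψ
  obtain ⟨hre, him⟩ := Complex.le_def.1 hle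
  rw [spreadCoeff_eq hH, AddChar.sum_eq_zero_iff_ne_zero.2 hψ, zero_add, ← hS, Complex.mul_re,
    ← him]
  simp only [Complex.neg_re, Complex.natCast_re, Complex.neg_im, Complex.natCast_im, neg_zero,
    mul_zero, sub_zero, Complex.sub_re, Complex.one_re] at hre ⊢
  nlinarith

lemma re_spreadCoeff_zero (hH : Pairwise (Disjoint on H)) :
    (spreadCoeff H z 0).re =
      Fintype.card G - (1 - z.re) * ∑ k, ((Nat.card (H k) : ℝ) - 1) := by
  have hS : ∑ k, ((Nat.card (H k) : ℂ) - 1) = ((∑ k, ((Nat.card (H k) : ℝ) - 1) : ℝ) : ℂ) := by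
    push_cast; rfl
  simp only [spreadCoeff_eq hH, sum_indicator_punctured_zero, hS, Complex.add_re,
    Complex.re_mul_ofReal, AddChar.zero_apply, sum_const, card_univ, nsmul_eq_mul, mul_one,
    Complex.natCast_re, Complex.sub_re, Complex.one_re]
  ring

-- For `z = 0` the coefficient at the trivial character counts the complement of
-- `puncturedUnion H`, which contains `0`.
lemma sum_card_sub_one_lt_card (hH : Pairwise (Disjoint on H)) :
    ∑ k, ((Nat.card (H k) : ℝ) - 1) < Fintype.card G := by
  classical
  have hcoeff : (spreadCoeff H 0 0).re = ∑ x, if x ∈ puncturedUnion H then (0 : ℝ) else 1 := by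
    simp only [spreadCoeff, Set.mulIndicator_apply, AddChar.zero_apply, mul_one, Complex.re_sum,
      apply_ite Complex.re, Complex.zero_re, Complex.one_re]
  have hpos : 0 < (spreadCoeff H 0 0).re := by
    rw [hcoeff]
    exact Finset.sum_pos' (fun x _ => by split_ifs <;> simp)
      ⟨0, mem_univ 0, by simp [zero_notMem_puncturedUnion]⟩
  rw [re_spreadCoeff_zero hH] at hpos
  simpa using hpos

end PartialSpread

section ThreeCharacters

variable {G ι : Type*} [AddCommGroup G] [Fintype G] [Finite ι] {H : ι → AddSubgroup G} {z : ℂ}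

lemma re_spreadCoeff_zero_add_add_lt [Nonempty ι] (hH : Pairwise (Disjoint on H))
    (hz : z.re < 1) (hcard : ∀ k, 4 ≤ Nat.card (H k)) {ψ₁ ψ₂ : AddChar G ℂ} (h₁ : ψ₁ ≠ 0)
    (h₂ : ψ₂ ≠ 0) :
    (spreadCoeff H z 0).re + (spreadCoeff H z ψ₁).re + (spreadCoeff H z ψ₂).re <
      Fintype.card G := by
  have := Fintype.ofFinite ι
  have hloss : (3 : ℝ) * Fintype.card ι ≤ ∑ k, ((Nat.card (H k) : ℝ) - 1) :=
    mul_card_le_sum_card_sub_one fun k => by exact_mod_cast hcard k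
  have hι : (0 : ℝ) < Fintype.card ι := by exact_mod_cast Fintype.card_pos
  have hgain₁ := re_spreadCoeff_le hH hz.le h₁
  have hgain₂ := re_spreadCoeff_le hH hz.le h₂
  rw [re_spreadCoeff_zero hH]
  nlinarith

lemma re_spreadCoeff_add_add_lt (hH : Pairwise (Disjoint on H)) (hz : z.re ≤ 1)
    (hcard : ∀ k, 3 * (1 - z.re) + 1 ≤ Nat.card (H k)) {ψ₁ ψ₂ ψ₃ : AddChar G ℂ} (h₁ : ψ₁ ≠ 0)
    (h₂ : ψ₂ ≠ 0) (h₃ : ψ₃ ≠ 0) :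
    (spreadCoeff H z ψ₁).re + (spreadCoeff H z ψ₂).re + (spreadCoeff H z ψ₃).re <
      Fintype.card G := by
  have := Fintype.ofFinite ι
  linarith [re_spreadCoeff_le hH hz h₁, re_spreadCoeff_le hH hz h₂, re_spreadCoeff_le hH hz h₃,
    mul_card_le_sum_card_sub_one hcard, sum_card_sub_one_lt_card hH]

theorem re_spreadCoeff_add_add_lt_of_ne [Nonempty ι] (hH : Pairwise (Disjoint on H))
    (hz : ‖z‖ ≤ 1) (hz1 : z ≠ 1) (hcard : ∀ k, 7 ≤ Nat.card (H k)) {ψ₁ ψ₂ ψ₃ : AddChar G ℂ}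
    (h₁₂ : ψ₁ ≠ ψ₂) (h₁₃ : ψ₁ ≠ ψ₃) (h₂₃ : ψ₂ ≠ ψ₃) :
    (spreadCoeff H z ψ₁).re + (spreadCoeff H z ψ₂).re + (spreadCoeff H z ψ₃).re <
      Fintype.card G := by
  have hre : z.re < 1 := re_lt_one_of_norm_le_one hz hz1
  have hzero {ψ ψ' : AddChar G ℂ} := re_spreadCoeff_zero_add_add_lt hH hre
    (fun k => le_trans (by norm_num) (hcard k)) (ψ₁ := ψ) (ψ₂ := ψ')
  rcases eq_or_ne ψ₁ 0 with rfl | h₁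
  · exact hzero h₁₂.symm h₁₃.symm
  rcases eq_or_ne ψ₂ 0 with rfl | h₂
  · linarith [hzero h₁ h₂₃.symm]
  rcases eq_or_ne ψ₃ 0 with rfl | h₃
  · linarith [hzero h₁ h₂]
  refine re_spreadCoeff_add_add_lt hH hre.le (fun k => ?_) h₁ h₂ h₃
  have hcard_k : (7 : ℝ) ≤ Nat.card (H k) := by exact_mod_cast hcard k
  linarith [neg_le_of_abs_le ((Complex.abs_re_le_norm z).trans hz)]

end ThreeCharacters

section Walsh

variable {N : ℕ} [NeZero N] {m : Type*} [Fintype m]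

lemma stdAddChar_eq_exp_pow (a : ZMod N) :
    ZMod.stdAddChar a = Complex.exp (2 * Real.pi * Complex.I / N) ^ a.val := by
  rw [ZMod.stdAddChar_apply, ZMod.toCircle_apply, ← Complex.exp_nat_mul]
  ring_nf

/-- The character `x ↦ ζ ^ (-w·x)` of `(ZMod N)ᵐ`, where `ζ = exp (2πi / N)`. -/
noncomputable def dotProductChar (w : m → ZMod N) : AddChar (m → ZMod N) ℂ :=
  ZMod.stdAddChar.compAddMonoidHom (-(dotProductBilin (ZMod N) (ZMod N) w)).toAddMonoidHom

lemma dotProductChar_apply (w x : m → ZMod N) :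
    dotProductChar w x = ZMod.stdAddChar (-(w ⬝ᵥ x)) := rfl

lemma dotProductChar_injective :
    Function.Injective (dotProductChar : (m → ZMod N) → AddChar (m → ZMod N) ℂ) := by
  classical
  intro v w h
  funext i
  have hi := DFunLike.congr_fun h (Pi.single i 1)
  simpa [dotProductChar_apply, ZMod.injective_stdAddChar.eq_iff] using hi

variable [DecidableEq m]

/-- The Walsh transform `w ↦ ∑ x, ζ ^ (f x - w·x)` of `f`, where `ζ = exp (2πi / N)`. -/
noncomputable def walshTransform (f : (m → ZMod N) → ZMod N) (w : m → ZMod N) : ℂ :=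
  ∑ x, ZMod.stdAddChar (f x - w ⬝ᵥ x)

lemma walshTransform_eq_spreadCoeff {ι : Type*} {W : ι → Submodule (ZMod N) (m → ZMod N)}
    {f : (m → ZMod N) → ZMod N} (hf1 : ∀ x k, x ≠ 0 → x ∈ W k → f x = 1)
    (hf0 : ∀ x, (x = 0 ∨ ∀ k, x ∉ W k) → f x = 0) (w : m → ZMod N) :
    walshTransform f w =
      spreadCoeff (fun k => (W k).toAddSubgroup) (ZMod.stdAddChar (1 : ZMod N))
        (dotProductChar w) := by
  refine Finset.sum_congr rfl fun x _ => ?_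
  rw [sub_eq_add_neg, AddChar.map_add_eq_mul, ← dotProductChar_apply]
  congr 1
  by_cases hx : x ∈ puncturedUnion fun k => (W k).toAddSubgroup
  · obtain ⟨hx0, k, hk⟩ := mem_puncturedUnion.1 hx
    rw [Set.mulIndicator_of_mem hx, hf1 x k hx0 hk]
  · rw [Set.mulIndicator_of_notMem hx, hf0 x, AddChar.map_zero_eq_one]
    simpa [mem_puncturedUnion, or_iff_not_imp_left] using hx

theorem stmt11_general (hN : N ≠ 1) {ι : Type*} [Finite ι] [Nonempty ι]
    {W : ι → Submodule (ZMod N) (m → ZMod N)} (hcard : ∀ k, 7 ≤ Nat.card (W k))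
    (hW : Pairwise (Disjoint on W)) {f : (m → ZMod N) → ZMod N}
    (hf1 : ∀ x k, x ≠ 0 → x ∈ W k → f x = 1) (hf0 : ∀ x, (x = 0 ∨ ∀ k, x ∉ W k) → f x = 0)
    {w₁ w₂ w₃ : m → ZMod N} (h₁₂ : w₁ ≠ w₂) (h₁₃ : w₁ ≠ w₃) (h₂₃ : w₂ ≠ w₃) :
    (walshTransform f w₁).re + (walshTransform f w₂).re + (walshTransform f w₃).re <
      N ^ Fintype.card m := by
  have : Nontrivial (ZMod N) := ZMod.nontrivial_iff.2 hN
  have hH : Pairwise (Disjoint on fun k => (W k).toAddSubgroup) := fun _ _ hij =>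
    AddSubgroup.disjoint_def.2 fun hi hj => Submodule.disjoint_def.1 (hW hij) _ hi hj
  have hζ : ZMod.stdAddChar (1 : ZMod N) ≠ 1 := by
    rw [← AddChar.map_zero_eq_one (ZMod.stdAddChar (N := N))]
    exact ZMod.injective_stdAddChar.ne one_ne_zero
  simp only [walshTransform_eq_spreadCoeff hf1 hf0]
  simpa using re_spreadCoeff_add_add_lt_of_ne hH (AddChar.norm_apply _ _).le hζ hcard
    (dotProductChar_injective.ne h₁₂) (dotProductChar_injective.ne h₁₃)
    (dotProductChar_injective.ne h₂₃)

end Walsh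

theorem stmt11 (t n s : ℕ) (ht : n = 2 * t) (hn : 6 ≤ n) (hs : 2 ≤ s)
    (hs2 : s ≤ 3 ^ t - 1)
    (W : Fin s → Submodule (ZMod 3) (Fin n → ZMod 3))
    (hdim : ∀ k, Module.finrank (ZMod 3) (W k) = t)
    (hdisj : ∀ i j, i ≠ j → W i ⊓ W j = ⊥)
    (f : (Fin n → ZMod 3) → ZMod 3)
    (hf1 : ∀ (x : Fin n → ZMod 3) (k : Fin s), x ≠ 0 → x ∈ W k → f x = 1)
    (hf0 : ∀ x : Fin n → ZMod 3, (x = 0 ∨ ∀ k, x ∉ W k) → f x = 0)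
    (walsh : (Fin n → ZMod 3) → ℂ)
    (hwalsh : ∀ w : Fin n → ZMod 3, walsh w = ∑ x : Fin n → ZMod 3,
      Complex.exp (2 * Real.pi * Complex.I / 3) ^ ((f x - w ⬝ᵥ x).val))
    :
    ∀ w1 w2 w3 : Fin n → ZMod 3, w1 ≠ w2 → w1 ≠ w3 → w2 ≠ w3 → w1 + w2 + w3 = 0 →
      (walsh w1).re + (walsh w2).re + (walsh w3).re ≠ 3 ^ n := by
  intro w1 w2 w3 h12 h13 h23 _
  have : Nonempty (Fin s) := ⟨⟨0, by lia⟩⟩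
  have hcard (k : Fin s) : 7 ≤ Nat.card (W k) := by
    rw [Module.natCard_eq_pow_finrank (K := ZMod 3), hdim, Nat.card_zmod]
    exact le_trans (by norm_num) (Nat.pow_le_pow_right three_pos (show 2 ≤ t by lia))
  have hwalsh_eq : walsh = walshTransform f := funext fun w => by
    simp [hwalsh, walshTransform, stdAddChar_eq_exp_pow]
  rw [hwalsh_eq]
  simpa using (stmt11_general (by norm_num) hcard (fun i j hij => disjoint_iff.2 (hdisj i j hij))
    hf1 hf0 h12 h13 h23).ne
end

section
/- Let n be a positive integer and let f : F_3^n → F_3 be a function with f(0) = 0 such that f is not equal to any linear form, i.e. for every v ∈ F_3^n there exists x ∈ F_3^n with f(x) ≠ v·x. Then the F_3-linear map (α, w) ↦ c_{α,w} from F_3 × F_3^n to F_3^{3^n − 1} is injective; consequently the code C_f has length 3^n − 1 and dimension n + 1, i.e. exactly 3^{n+1} codewords. -/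
open Matrix Finset

/-!
If `c_{α,w} = 0`, then `α f(x) + w·x` vanishes for all `x`, including `x = 0` because `f(0) = 0`.
If `α` were nonzero, dividing by it would give `f(x) = (-α⁻¹ w)·x`, a linear form. Hence `α = 0`,
and then `w = 0` because the dot product is nondegenerate.
-/

section Semiring

variable {K ι : Type*} [Fintype ι] [Semiring K]

/-- The encoder `(α, w) ↦ c_{α,w}` of the code `C_f`. The coordinates of a codeword are indexed by
the subtype of nonzero vectors. -/
def puncturedEncoder (f : (ι → K) → K) :
    K × (ι → K) →ₗ[K] {x : ι → K // x ≠ 0} → K where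
  toFun p x := p.1 * f x.1 + p.2 ⬝ᵥ x.1
  map_add' p q := by
    ext x
    simp only [Prod.fst_add, Prod.snd_add, add_mul, add_dotProduct, Pi.add_apply]
    exact add_add_add_comm _ _ _ _
  map_smul' a p := by
    ext x
    simp [mul_add, mul_assoc]

/-- The code `C_f`, as the submodule of all codewords. -/
def puncturedCode (f : (ι → K) → K) : Submodule K ({x : ι → K // x ≠ 0} → K) :=
  LinearMap.range (puncturedEncoder f)

theorem coe_puncturedCode (f : (ι → K) → K) :
    (puncturedCode f : Set ({x : ι → K // x ≠ 0} → K)) =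
      {c | ∃ (α : K) (w : ι → K), c = fun x => α * f x.1 + w ⬝ᵥ x.1} := by
  ext c
  simp only [puncturedCode, LinearMap.coe_range, Set.mem_range, Prod.exists, Set.mem_ofPred_eq,
    eq_comm (a := c)]
  rfl

theorem mul_add_dotProduct_eq_zero_of_puncturedEncoder_eq_zero {f : (ι → K) → K} (hf0 : f 0 = 0)
    {p : K × (ι → K)} (hp : puncturedEncoder f p = 0) (x : ι → K) :
    p.1 * f x + p.2 ⬝ᵥ x = 0 := by
  obtain rfl | hx := eq_or_ne x 0
  · simp [hf0]
  · exact congrFun hp ⟨x, hx⟩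

end Semiring

section DivisionRing

variable {K ι : Type*} [Fintype ι] [DivisionRing K] {f : (ι → K) → K}

theorem eq_neg_inv_smul_dotProduct_of_mul_add_eq_zero {α y : K} (hα : α ≠ 0) {w x : ι → K}
    (h : α * y + w ⬝ᵥ x = 0) : y = (-(α⁻¹ • w)) ⬝ᵥ x := by
  rw [neg_dotProduct, smul_dotProduct, smul_eq_mul, ← mul_neg, eq_inv_mul_iff_mul_eq₀ hα]
  exact eq_neg_of_add_eq_zero_left h

theorem puncturedEncoder_injective (hf0 : f 0 = 0) (hf : ∀ v : ι → K, ∃ x, f x ≠ v ⬝ᵥ x) :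
    Function.Injective (puncturedEncoder f) := by
  refine (injective_iff_map_eq_zero _).2 fun ⟨α, w⟩ hp => ?_
  have hvanish : ∀ x, α * f x + w ⬝ᵥ x = 0 :=
    mul_add_dotProduct_eq_zero_of_puncturedEncoder_eq_zero hf0 hp
  have hα : α = 0 := by
    by_contra hα
    obtain ⟨x, hx⟩ := hf (-(α⁻¹ • w))
    exact hx (eq_neg_inv_smul_dotProduct_of_mul_add_eq_zero hα (hvanish x))
  have hw : w = 0 := dotProduct_eq_zero w fun x => by simpa [hα] using hvanish x
  rw [hα, hw, Prod.mk_zero_zero]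

theorem finrank_puncturedCode (hf0 : f 0 = 0) (hf : ∀ v : ι → K, ∃ x, f x ≠ v ⬝ᵥ x) :
    Module.finrank K (puncturedCode f) = Fintype.card ι + 1 := by
  rw [puncturedCode, LinearMap.finrank_range_of_inj (puncturedEncoder_injective hf0 hf),
    Module.finrank_prod, Module.finrank_self, Module.finrank_fintype_fun_eq_card, add_comm]

theorem stmt15_general [Fintype K] (hf0 : f 0 = 0) (hf : ∀ v : ι → K, ∃ x, f x ≠ v ⬝ᵥ x) :
    Function.Injective (fun p : K × (ι → K) =>
      fun x : {x : ι → K // x ≠ 0} => p.1 * f x.1 + p.2 ⬝ᵥ x.1) ∧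
    Nat.card {c : {x : ι → K // x ≠ 0} → K |
      ∃ (α : K) (w : ι → K), c = fun x => α * f x.1 + w ⬝ᵥ x.1} =
        Fintype.card K ^ (Fintype.card ι + 1) := by
  refine ⟨puncturedEncoder_injective hf0 hf, ?_⟩
  rw [← coe_puncturedCode, ← finrank_puncturedCode hf0 hf, ← Nat.card_eq_fintype_card]
  exact Module.natCard_eq_pow_finrank

end DivisionRing

theorem stmt15 (n : ℕ) (hn : 1 ≤ n)
    (f : (Fin n → ZMod 3) → ZMod 3) (hf0 : f 0 = 0)
    (hf : ∀ v : Fin n → ZMod 3, ∃ x, f x ≠ v ⬝ᵥ x)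
    (C : Set ({x : Fin n → ZMod 3 // x ≠ 0} → ZMod 3))
    (hC : C = {c | ∃ (α : ZMod 3) (w : Fin n → ZMod 3),
      c = fun x => α * f x.1 + w ⬝ᵥ x.1})
    :
    Function.Injective (fun p : ZMod 3 × (Fin n → ZMod 3) =>
      fun x : {x : Fin n → ZMod 3 // x ≠ 0} => p.1 * f x.1 + p.2 ⬝ᵥ x.1) ∧
    Nat.card C = 3 ^ (n + 1) := by
  subst hC
  simpa only [ZMod.card, Fintype.card_fin] using stmt15_general hf0 hf
end

section
/- Let n be a positive integer and let f : F_3^n → F_3 be a function with f(0) = 0. Then for every w ∈ F_3^n: wt(c_{0,w}) = 2·3^{n−1} whenever w ≠ 0, and for every α ∈ {1, 2} ⊆ F_3, the Hamming weight of c_{α,w} satisfies wt(c_{α,w}) = 2(3^{n−1} − Re(f̂(−α^{−1}w))/3) as an equality of real numbers (in particular, for α = 1 the weight is 2(3^{n−1} − Re(f̂(−w))/3) and for α = 2 it is 2(3^{n−1} − Re(f̂(w))/3)). -/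
open Matrix Finset

/-!
For a primitive additive character `ψ` of `R`, orthogonality says that `∑ a, ψ (a * b)` is `|R|`
if `b = 0` and `0` otherwise, so the zeros of a word `g` are counted by the exponential sums
`∑ x, ψ (a * g x)`. Over `ZMod 3` only `a = 0, 1, -1` occur, and the last two give conjugate sums;
hence the weight of `g` is determined by the real part of `∑ x, ψ (g x)`. For `g x = w ⬝ᵥ x` with
`w ≠ 0` this sum vanishes, while `α * f x + w ⬝ᵥ x` is a nonzero multiple of
`f x - (-α⁻¹ • w) ⬝ᵥ x`, whose exponential sum is a value of the Walsh transform.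
-/

theorem hammingNorm_subtype_eq {X M : Type*} [Fintype X] [Zero M] [DecidableEq M]
    {p : X → Prop} [DecidablePred p] (g : X → M) (hg : ∀ x, g x ≠ 0 → p x) :
    hammingNorm (fun x : {x // p x} => g x) = hammingNorm g := by
  rw [hammingNorm, hammingNorm, ← card_map (Function.Embedding.subtype p)]
  congr 1
  ext x
  simpa using hg x

theorem card_filter_eq_zero_add_hammingNorm {X M : Type*} [Fintype X] [Zero M] [DecidableEq M]
    (g : X → M) : #{x | g x = 0} + hammingNorm g = Fintype.card X :=
  card_filter_add_card_filter_not fun x => g x = 0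

section AddChar

variable {R R' : Type*} [CommRing R] [Fintype R] [CommRing R'] [IsDomain R'] {ψ : AddChar R R'}

theorem sum_sum_addChar_mul_eq_card_mul [DecidableEq R] {X : Type*} [Fintype X]
    (hψ : ψ.IsPrimitive) (g : X → R) :
    ∑ x, ∑ a, ψ (a * g x) = Fintype.card R * (Fintype.card X - hammingNorm g) := by
  simp only [AddChar.sum_mulShift _ hψ, ← card_filter_eq_zero_add_hammingNorm g,
    Nat.cast_ite, Nat.cast_zero, sum_ite, sum_const, nsmul_eq_mul, mul_zero, add_zero]
  push_cast
  ring

theorem sum_addChar_dotProduct_eq_zero {ι : Type*} [Fintype ι] [DecidableEq ι]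
    (hψ : ψ.IsPrimitive) {w : ι → R} (hw : w ≠ 0) : ∑ x, ψ (w ⬝ᵥ x) = 0 := by
  obtain ⟨i, hi⟩ := Function.ne_iff.mp hw
  obtain ⟨r, hr⟩ := AddChar.ne_one_iff.mp (hψ hi)
  let χ : AddChar (ι → R) R' := ψ.compAddMonoidHom (dotProductBilin R R w).toAddMonoidHom
  have hχ : χ ≠ 1 := AddChar.ne_one_iff.mpr ⟨Pi.single i r, by simpa [χ] using hr⟩
  exact AddChar.sum_eq_zero_of_ne_one hχ

end AddChar

theorem exp_pow_val_eq_stdAddChar {N : ℕ} [NeZero N] (v : ZMod N) :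
    Complex.exp (2 * Real.pi * Complex.I / N) ^ v.val = ZMod.stdAddChar v := by
  rw [ZMod.stdAddChar_apply, ZMod.toCircle_apply, ← Complex.exp_nat_mul]
  congr 1
  ring

section ZModThree

variable {ψ : AddChar (ZMod 3) ℂ}

theorem re_sum_addChar_mul_zmod_three (b : ZMod 3) :
    (∑ a, ψ (a * b)).re = 1 + 2 * (ψ b).re := by
  have hsum : ∑ a, ψ (a * b) = ψ (0 * b) + ψ (1 * b) + ψ (-1 * b) :=
    Fin.sum_univ_three fun a : ZMod 3 => ψ (a * b)
  rw [hsum, zero_mul, one_mul, neg_one_mul, AddChar.map_zero_eq_one, AddChar.map_neg_eq_conj]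
  simp only [Complex.add_re, Complex.one_re, Complex.conj_re]
  ring

theorem hammingNorm_eq_card_sub_re_sum_addChar {X : Type*} [Fintype X] (hψ : ψ.IsPrimitive)
    (g : X → ZMod 3) :
    (hammingNorm g : ℝ) = 2 / 3 * (Fintype.card X - (∑ x, ψ (g x)).re) := by
  have hcount : (Fintype.card X : ℝ) + 2 * (∑ x, ψ (g x)).re =
      3 * (Fintype.card X - hammingNorm g) := by
    calc (Fintype.card X : ℝ) + 2 * (∑ x, ψ (g x)).re
      _ = ∑ x, (∑ a, ψ (a * g x)).re := by
        simp_rw [re_sum_addChar_mul_zmod_three]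
        simp [sum_add_distrib, mul_sum]
      _ = (∑ x, ∑ a, ψ (a * g x)).re := (Complex.re_sum _ _).symm
      _ = 3 * (Fintype.card X - hammingNorm g) := by
        rw [sum_sum_addChar_mul_eq_card_mul hψ, ZMod.card]
        norm_cast
  linarith

theorem hammingNorm_punctured_eq_pow_sub_re_sum_addChar {ι : Type*} [Fintype ι] [DecidableEq ι]
    [Nonempty ι] (hψ : ψ.IsPrimitive) (g : (ι → ZMod 3) → ZMod 3) (hg : g 0 = 0) :
    (hammingNorm (fun x : {x : ι → ZMod 3 // x ≠ 0} => g x) : ℝ) =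
      2 * (3 ^ (Fintype.card ι - 1) - (∑ x, ψ (g x)).re / 3) := by
  have hpow : (3 : ℝ) ^ Fintype.card ι = 3 * 3 ^ (Fintype.card ι - 1) :=
    (mul_pow_sub_one Fintype.card_ne_zero 3).symm
  have hne (x : ι → ZMod 3) (hx : g x ≠ 0) : x ≠ 0 := fun h => hx (h ▸ hg)
  rw [hammingNorm_subtype_eq g hne, hammingNorm_eq_card_sub_re_sum_addChar hψ,
    Fintype.card_fun, ZMod.card]
  push_cast
  rw [hpow]
  ring

end ZModThree

theorem hammingNorm_mul_add_dotProduct {F ι X : Type*} [Field F] [DecidableEq F] [Fintype ι]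
    [Fintype X] {α : F} (hα : α ≠ 0) (f : X → F) (w : ι → F) (v : X → ι → F) :
    hammingNorm (fun x => α * f x + w ⬝ᵥ v x) =
      hammingNorm fun x => f x - (-α⁻¹ • w) ⬝ᵥ v x := by
  rw [← hammingNorm_smul (fun _ => IsSMulRegular.of_ne_zero hα) fun x => f x - _]
  congr 1
  ext x
  simp [mul_add, hα]

theorem stmt16 (n : ℕ) (hn : 1 ≤ n)
    (f : (Fin n → ZMod 3) → ZMod 3) (hf0 : f 0 = 0)
    (walsh : (Fin n → ZMod 3) → ℂ)
    (hwalsh : ∀ w : Fin n → ZMod 3, walsh w = ∑ x : Fin n → ZMod 3,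
      Complex.exp (2 * Real.pi * Complex.I / 3) ^ ((f x - w ⬝ᵥ x).val))
    :
    ∀ w : Fin n → ZMod 3,
      (w ≠ 0 →
        hammingNorm (fun x : {x : Fin n → ZMod 3 // x ≠ 0} =>
          (0 : ZMod 3) * f x.1 + w ⬝ᵥ x.1) = 2 * 3 ^ (n - 1)) ∧
      (∀ α : ZMod 3, α = 1 ∨ α = 2 →
        (hammingNorm (fun x : {x : Fin n → ZMod 3 // x ≠ 0} => α * f x.1 + w ⬝ᵥ x.1) : ℝ) =
          2 * (3 ^ (n - 1) - (walsh ((-α⁻¹) • w)).re / 3)) := by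
  have : NeZero n := ⟨Nat.one_le_iff_ne_zero.mp hn⟩
  have hψ := ZMod.isPrimitive_stdAddChar 3
  have hwalsh_char (w : Fin n → ZMod 3) : walsh w = ∑ x, ZMod.stdAddChar (f x - w ⬝ᵥ x) := by
    simp only [hwalsh, ← exp_pow_val_eq_stdAddChar, Nat.cast_ofNat]
  refine fun w => ⟨fun hw => ?_, fun α hα => ?_⟩
  · have hweight := hammingNorm_punctured_eq_pow_sub_re_sum_addChar hψ (w ⬝ᵥ ·) (dotProduct_zero w)
    rw [sum_addChar_dotProduct_eq_zero hψ hw, Fintype.card_fin, Complex.zero_re, zero_div,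
      sub_zero] at hweight
    simp only [zero_mul, zero_add]
    exact_mod_cast hweight
  · have hα0 : α ≠ 0 := by rcases hα with rfl | rfl <;> decide
    rw [hammingNorm_mul_add_dotProduct hα0, hwalsh_char,
      hammingNorm_punctured_eq_pow_sub_re_sum_addChar hψ (fun x => f x - (-α⁻¹ • w) ⬝ᵥ x)
        (by simp [hf0]), Fintype.card_fin]
end

section
/- Let q be a prime power, F_q the finite field with q elements, and n a positive integer. For any two vectors w_1, w_2 ∈ F_q^n, supp(w_1) ⊆ supp(w_2) if and only if Σ_{c ∈ F_q, c ≠ 0} wt(w_2 + c·w_1) = (q − 1)·wt(w_2) − wt(w_1). -/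
open Matrix Finset

/-!
Count the pairs `(c, i)`, over all scalars `c` including `0`, with `(w₂ + c • w₁) i ≠ 0`. A
coordinate in the support of `w₁` is killed by exactly one `c`; any other coordinate keeps the value
`w₂ i`. Hence `∑ c, wt (w₂ + c • w₁) = q * #(supp w₁ ∪ supp w₂) - wt w₁`, so the equation of the
theorem says `#(supp w₁ ∪ supp w₂) = #(supp w₂)`.
-/

theorem card_union_eq_card_right_iff {α : Type*} [DecidableEq α] {s t : Finset α} :
    #(s ∪ t) = #t ↔ s ⊆ t := by
  rw [← union_eq_right]
  exact ⟨fun h ↦ (eq_of_subset_of_card_le subset_union_right h.le).symm, congrArg card⟩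

theorem card_union_support_eq_hammingNorm_iff {ι M : Type*} [Fintype ι] [Zero M] [DecidableEq M]
    (w₁ w₂ : ι → M) :
    #{i | w₁ i ≠ 0 ∨ w₂ i ≠ 0} = hammingNorm w₂ ↔
      Function.support w₁ ⊆ Function.support w₂ := by
  classical
  rw [filter_or, hammingNorm, card_union_eq_card_right_iff]
  simp [Set.subset_def, Finset.subset_iff]

section DivisionRing

variable {F ι : Type*} [DivisionRing F] [Fintype F] [DecidableEq F] [Fintype ι]

theorem card_filter_add_mul_eq_zero {a : F} (ha : a ≠ 0) (b : F) :
    #{c : F | b + c * a = 0} = 1 := by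
  have root_iff (c : F) : b + c * a = 0 ↔ c = -b / a := by
    rw [eq_div_iff ha, add_comm, add_eq_zero_iff_eq_neg]
  simp only [root_iff, filter_eq', mem_univ, if_true, card_singleton]

theorem card_filter_add_mul_ne_zero_add_ite (a b : F) :
    #{c : F | b + c * a ≠ 0} + (if a ≠ 0 then 1 else 0) =
      if a ≠ 0 ∨ b ≠ 0 then Fintype.card F else 0 := by
  by_cases ha : a = 0
  · by_cases hb : b = 0 <;> simp [ha, hb]
  · have total := card_filter_add_card_filter_not (s := univ) fun c : F ↦ b + c * a = 0
    rw [card_filter_add_mul_eq_zero ha, card_univ] at total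
    simpa [ha, add_comm] using total

theorem sum_hammingNorm_add_smul_add_hammingNorm (w₁ w₂ : ι → F) :
    ∑ c : F, hammingNorm (w₂ + c • w₁) + hammingNorm w₁ =
      Fintype.card F * #{i | w₁ i ≠ 0 ∨ w₂ i ≠ 0} := by
  have double_count : ∑ c : F, hammingNorm (w₂ + c • w₁) =
      ∑ i, #{c : F | w₂ i + c * w₁ i ≠ 0} :=
    sum_card_bipartiteAbove_eq_sum_card_bipartiteBelow fun (c : F) i ↦ w₂ i + c * w₁ i ≠ 0
  calc
    _ = ∑ i, (#{c : F | w₂ i + c * w₁ i ≠ 0} + if w₁ i ≠ 0 then 1 else 0) := by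
      rw [double_count, hammingNorm, card_filter, sum_add_distrib]
    _ = ∑ i, if w₁ i ≠ 0 ∨ w₂ i ≠ 0 then Fintype.card F else 0 := by
      simp only [card_filter_add_mul_ne_zero_add_ite]
    _ = _ := by rw [← sum_filter, sum_const, smul_eq_mul, mul_comm]

theorem sum_nonzero_hammingNorm_add_smul (w₁ w₂ : ι → F) :
    ∑ c ∈ univ \ {(0 : F)}, (hammingNorm (w₂ + c • w₁) : ℤ) =
      Fintype.card F * #{i | w₁ i ≠ 0 ∨ w₂ i ≠ 0} - hammingNorm w₂ - hammingNorm w₁ := by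
  have split_zero := sum_sdiff (subset_univ {(0 : F)})
    (f := fun c ↦ (hammingNorm (w₂ + c • w₁) : ℤ))
  rw [sum_singleton, zero_smul, add_zero] at split_zero
  have sum_all := congrArg (Nat.cast (R := ℤ)) (sum_hammingNorm_add_smul_add_hammingNorm w₁ w₂)
  push_cast at sum_all
  linarith

theorem stmt18_general (w₁ w₂ : ι → F) :
    Function.support w₁ ⊆ Function.support w₂ ↔
      ∑ c ∈ univ \ {(0 : F)}, (hammingNorm (w₂ + c • w₁) : ℤ) =
        ((Fintype.card F : ℤ) - 1) * hammingNorm w₂ - hammingNorm w₁ := by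
  have card_ne_zero : (Fintype.card F : ℤ) ≠ 0 := mod_cast Fintype.card_ne_zero
  rw [← card_union_support_eq_hammingNorm_iff, sum_nonzero_hammingNorm_add_smul, sub_one_mul,
    sub_left_inj, sub_left_inj, mul_right_inj' card_ne_zero, Nat.cast_inj]

end DivisionRing

theorem stmt18 (F : Type*) [Field F] [Fintype F] [DecidableEq F] (q n : ℕ)
    (hq : Fintype.card F = q) (w1 w2 : Fin n → F) :
    {i | w1 i ≠ 0} ⊆ {i | w2 i ≠ 0} ↔
      (∑ c ∈ Finset.univ \ {(0 : F)}, (hammingNorm (w2 + c • w1) : ℤ)) =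
        ((q : ℤ) - 1) * (hammingNorm w2 : ℤ) - (hammingNorm w1 : ℤ) := by
  subst hq
  exact stmt18_general w1 w2
end

section
/- (Ashikhmin–Barg) Let p be a prime and let C be an F_p-linear code in F_p^n, i.e. an F_p-linear subspace of F_p^n. Let wt_min denote the minimum Hamming weight of a nonzero codeword of C and wt_max the maximum Hamming weight of a codeword of C. If wt_min/wt_max > (p − 1)/p (equivalently, p·wt_min > (p − 1)·wt_max), then C is minimal: for every nonzero codeword c ∈ C and every codeword c' ∈ C with supp(c') ⊆ supp(c), there exists λ ∈ F_p with c' = λ·c. -/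
open Matrix Finset

/-!
If `supp c' ⊆ supp c`, then at each coordinate of `supp c` exactly one scalar `a` makes
`c' - a • c` vanish, and outside `supp c` every scalar does. Hence, over a field with `q` elements,
the `q` words `c' - a • c` have average weight `(q - 1) / q * wt c`. One of at most average weight
is lighter than every nonzero codeword, so it is zero.
-/

section WeightsOnALine

variable {K ι : Type*} [Field K] [Fintype K] [DecidableEq K] [Fintype ι]

lemma card_filter_sub_mul_ne_zero (x : K) {y : K} (hy : y ≠ 0) :
    #{a : K | x - a * y ≠ 0} = Fintype.card K - 1 := by
  have eq_compl : ({a | x - a * y ≠ 0} : Finset K) = {x / y}ᶜ := by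
    ext a
    simp [sub_eq_zero, div_eq_iff hy, eq_comm (a := a)]
  rw [eq_compl, card_compl, card_singleton]

lemma sum_hammingNorm_sub_smul {c c' : ι → K}
    (hsupp : Function.support c' ⊆ Function.support c) :
    ∑ a : K, hammingNorm (c' - a • c) = (Fintype.card K - 1) * hammingNorm c := by
  have card_at (i : ι) :
      #{a : K | (c' - a • c) i ≠ 0} = (Fintype.card K - 1) * if c i ≠ 0 then 1 else 0 := by
    by_cases hi : c i = 0
    · have hi' : c' i = 0 := Function.notMem_support.mp fun h => hsupp h hi
      simp [hi, hi']
    · simpa [hi] using card_filter_sub_mul_ne_zero (c' i) hi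
  calc ∑ a : K, hammingNorm (c' - a • c)
      = ∑ i, #{a : K | (c' - a • c) i ≠ 0} := by
        simp only [hammingNorm, card_filter]
        exact sum_comm
    _ = (Fintype.card K - 1) * hammingNorm c := by
        simp only [card_at, ← mul_sum, hammingNorm, card_filter]

lemma exists_card_mul_hammingNorm_sub_smul_le {c c' : ι → K}
    (hsupp : Function.support c' ⊆ Function.support c) :
    ∃ a : K, Fintype.card K * hammingNorm (c' - a • c) ≤
      (Fintype.card K - 1) * hammingNorm c := by
  have sum_eq : ∑ a : K, Fintype.card K * hammingNorm (c' - a • c) =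
      ∑ _a : K, (Fintype.card K - 1) * hammingNorm c := by
    rw [← mul_sum, sum_hammingNorm_sub_smul hsupp, sum_const, card_univ, smul_eq_mul]
  obtain ⟨a, -, ha⟩ := exists_le_of_sum_le univ_nonempty sum_eq.le
  exact ⟨a, ha⟩

theorem stmt19_general (C : Submodule K (ι → K)) (wmin wmax : ℕ)
    (hmin : ∀ c ∈ C, c ≠ 0 → wmin ≤ hammingNorm c) (hmax : ∀ c ∈ C, hammingNorm c ≤ wmax)
    (h : (Fintype.card K - 1) * wmax < Fintype.card K * wmin) :
    ∀ c ∈ C, ∀ c' ∈ C, Function.support c' ⊆ Function.support c → ∃ a : K, c' = a • c := by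
  intro c hc c' hc' hsupp
  obtain ⟨a, ha⟩ := exists_card_mul_hammingNorm_sub_smul_le hsupp
  refine ⟨a, sub_eq_zero.mp ?_⟩
  by_contra hne
  refine h.not_ge ?_
  calc Fintype.card K * wmin
      ≤ Fintype.card K * hammingNorm (c' - a • c) := by
        gcongr
        exact hmin _ (C.sub_mem hc' (C.smul_mem a hc)) hne
    _ ≤ (Fintype.card K - 1) * hammingNorm c := ha
    _ ≤ (Fintype.card K - 1) * wmax := by
        gcongr
        exact hmax c hc

end WeightsOnALine

theorem stmt19 (p : ℕ) (hp : p.Prime) (n : ℕ)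
    (C : Submodule (ZMod p) (Fin n → ZMod p)) (wmin wmax : ℕ)
    (hmin : IsLeast {m : ℕ | ∃ c ∈ C, c ≠ 0 ∧ hammingNorm c = m} wmin)
    (hmax : IsGreatest {m : ℕ | ∃ c ∈ C, hammingNorm c = m} wmax)
    (h : p * wmin > (p - 1) * wmax) :
    ∀ c ∈ C, c ≠ 0 → ∀ c' ∈ C, {i | c' i ≠ 0} ⊆ {i | c i ≠ 0} →
      ∃ lam : ZMod p, c' = lam • c := by
  have : Fact p.Prime := ⟨hp⟩
  exact fun c hc _ => stmt19_general C wmin wmax (fun d hd hd0 => hmin.2 ⟨d, hd, hd0, rfl⟩)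
    (fun d hd => hmax.2 ⟨d, hd, rfl⟩) (by rwa [ZMod.card]) c hc
end
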